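/- For every real parameter α > 0 and every Borel probability measure ρ on ℂ, one has 1 ≤ (1/π) ∫_ℂ exp(α ∫_ℂ U_S(z,w) dρ(w)) dA_S(z) ≤ 2e^{α/2}/(2+α). -/

import Mathlib

open MeasureTheory

/-- The unipolar Green function of the sphere. -/
noncomputable def Usph (z w : ℂ) : ℝ :=
  1 / 2 + 1 / 2 * Real.log (‖z - w‖ ^ 2 / ((1 + ‖z‖ ^ 2) * (1 + ‖w‖ ^ 2)))

/-!
The measure `dA_S / π` is the uniform probability measure of the Riemann sphere, and `Usph z w`
depends only on the chordal distance between `z` and `w`. For `w = 0`, Archimedes' theorem (the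
height of a uniform point of the sphere is uniform) says that the squared chordal distance to `w`,
for the sphere of diameter `1`, is uniformly distributed on `[0, 1]`. Rotating the sphere by the
Möbius map `z ↦ (z - w) / (1 + conj w * z)` carries this over to every `w`, hence also to a `w`
drawn from `ρ` independently of `z`. So `Usph` has mean `0` for the product measure, and
`exp (α * Usph)` has mean `∫₀¹ exp (α / 2) * t ^ (α / 2) dt`; applying Jensen's inequality to
`exp (α * ·)` in the variable `z` gives the lower bound, and in the variable `w` the upper one.
-/

open Set
open scoped ENNReal ComplexConjugate

section ChangeOfVariables

theorem lintegral_image_eq_lintegral_norm_deriv_sq_mul {s : Set ℂ} {f f' : ℂ → ℂ}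
    (hs : MeasurableSet s) (hf' : ∀ z ∈ s, HasDerivWithinAt f (f' z) s z) (hf : InjOn f s)
    (g : ℂ → ℝ≥0∞) :
    ∫⁻ z in f '' s, g z = ∫⁻ z in s, ENNReal.ofReal (‖f' z‖ ^ 2) * g (f z) := by
  have hdet (c : ℂ) :
      |((ContinuousLinearMap.toSpanSingleton ℂ c).restrictScalars ℝ).det| = ‖c‖ ^ 2 := by
    simp [ContinuousLinearMap.det, LinearMap.det_restrictScalars, Algebra.norm_complex_eq,
      Complex.normSq_eq_norm_sq]
  simpa only [hdet] using lintegral_image_eq_lintegral_abs_det_fderiv_mul volume hs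
    (fun z hz ↦ (hf' z hz).hasFDerivWithinAt.restrictScalars ℝ) hf g

theorem lintegral_comp_norm_complex {g : ℝ → ℝ≥0∞} (hg : Measurable g) :
    ∫⁻ z : ℂ, g ‖z‖ = ENNReal.ofReal (2 * Real.pi) *
      ∫⁻ r in Ioi (0 : ℝ), ENNReal.ofReal r * g r := by
  calc ∫⁻ z : ℂ, g ‖z‖
      = ∫⁻ p in Ioi (0 : ℝ) ×ˢ Ioo (-Real.pi) Real.pi, ENNReal.ofReal p.1 * g p.1 := by
        rw [← Complex.lintegral_comp_polarCoord_symm]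
        refine setLIntegral_congr_fun (measurableSet_Ioi.prod measurableSet_Ioo) fun p hp ↦ ?_
        simp [abs_of_pos (mem_Ioi.1 hp.1)]
    _ = ∫⁻ r in Ioi (0 : ℝ), ∫⁻ _ in Ioo (-Real.pi) Real.pi, ENNReal.ofReal r * g r := by
        rw [Measure.volume_eq_prod, ← Measure.prod_restrict, lintegral_prod _ (by fun_prop)]
    _ = ENNReal.ofReal (2 * Real.pi) * ∫⁻ r in Ioi (0 : ℝ), ENNReal.ofReal r * g r := by
        simp only [setLIntegral_const, Real.volume_Ioo, sub_neg_eq_add, ← two_mul]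
        rw [lintegral_mul_const _ (by fun_prop), mul_comm]

theorem bijOn_sq_div_one_add_sq :
    BijOn (fun r : ℝ ↦ r ^ 2 / (1 + r ^ 2)) (Ioi 0) (Ioo 0 1) := by
  refine ⟨fun r (hr : 0 < r) ↦ ⟨by positivity, ?_⟩, fun a (ha : 0 < a) b (hb : 0 < b) hab ↦ ?_,
    fun x ⟨hx₀, hx₁⟩ ↦ ?_⟩
  · rw [div_lt_one (by positivity)]
    linarith
  · rw [div_eq_div_iff (by positivity) (by positivity)] at hab
    exact (pow_left_inj₀ ha.le hb.le two_ne_zero).1 (by linarith)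
  · have hx : 0 < x / (1 - x) := div_pos hx₀ (sub_pos.2 hx₁)
    refine ⟨√(x / (1 - x)), Real.sqrt_pos.2 hx, ?_⟩
    have : 1 - x ≠ 0 := (sub_pos.2 hx₁).ne'
    simp only [Real.sq_sqrt hx.le]
    field_simp
    ring

theorem lintegral_Ioo_eq_lintegral_Ioi_sq_div_one_add_sq (g : ℝ → ℝ≥0∞) :
    ∫⁻ x in Ioo (0 : ℝ) 1, g x =
      ∫⁻ r in Ioi (0 : ℝ), ENNReal.ofReal (2 * r / (1 + r ^ 2) ^ 2) *
        g (r ^ 2 / (1 + r ^ 2)) := by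
  have hderiv (r : ℝ) :
      HasDerivAt (fun r : ℝ ↦ r ^ 2 / (1 + r ^ 2)) (2 * r / (1 + r ^ 2) ^ 2) r := by
    refine ((hasDerivAt_pow 2 r).div ((hasDerivAt_pow 2 r).const_add 1)
      (by positivity)).congr_deriv ?_
    push_cast
    ring
  rw [← bijOn_sq_div_one_add_sq.image_eq, lintegral_image_eq_lintegral_abs_deriv_mul
    measurableSet_Ioi (fun r _ ↦ (hderiv r).hasDerivWithinAt) bijOn_sq_div_one_add_sq.injOn]
  refine setLIntegral_congr_fun measurableSet_Ioi fun r (hr : 0 < r) ↦ ?_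
  rw [abs_of_pos (by positivity)]

end ChangeOfVariables

section SphericalMeasure

/-- The density, with respect to planar Lebesgue measure, of the spherical area measure normalized
to total mass `1`. It is real-valued so that the Jacobian computations take place in `ℝ`. -/
noncomputable def sphericalDensity (z : ℂ) : ℝ :=
  1 / Real.pi * (1 / (1 + ‖z‖ ^ 2) ^ 2)

/-- The uniform probability measure on the Riemann sphere in the stereographic coordinate: it is
`dA_S / π` in the notation of the paper. -/
noncomputable def sphericalMeasure : Measure ℂ :=
  volume.withDensity fun z ↦ ENNReal.ofReal (sphericalDensity z)

/-- The squared chordal distance between the points of the Riemann sphere with stereographic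
coordinates `z` and `w`, on the sphere of diameter `1`, so that its values lie in `[0, 1]`. -/
noncomputable def chordalDistSq (z w : ℂ) : ℝ :=
  ‖z - w‖ ^ 2 / ((1 + ‖z‖ ^ 2) * (1 + ‖w‖ ^ 2))

theorem sphericalDensity_nonneg (z : ℂ) : 0 ≤ sphericalDensity z := by
  unfold sphericalDensity
  positivity

@[fun_prop]
theorem measurable_sphericalDensity : Measurable sphericalDensity := by
  unfold sphericalDensity
  fun_prop

@[fun_prop]
theorem measurable_uncurry_chordalDistSq : Measurable (Function.uncurry chordalDistSq) := by
  unfold chordalDistSq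
  fun_prop

theorem lintegral_sphericalMeasure {g : ℂ → ℝ≥0∞} (hg : Measurable g) :
    ∫⁻ z, g z ∂sphericalMeasure = ∫⁻ z, ENNReal.ofReal (sphericalDensity z) * g z :=
  lintegral_withDensity_eq_lintegral_mul volume (by fun_prop) hg

theorem integral_sphericalMeasure (f : ℂ → ℝ) :
    ∫ z, f z ∂sphericalMeasure = 1 / Real.pi * ∫ z, f z * (1 / (1 + ‖z‖ ^ 2) ^ 2) := by
  rw [sphericalMeasure, integral_withDensity_eq_integral_toReal_smul (by fun_prop) (by simp),
    ← integral_const_mul]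
  refine integral_congr_ae (.of_forall fun z ↦ ?_)
  simp only [ENNReal.toReal_ofReal (sphericalDensity_nonneg z), smul_eq_mul]
  rw [sphericalDensity]
  ring

theorem measurePreserving_chordalDistSq_zero :
    MeasurePreserving (fun z ↦ chordalDistSq z 0) sphericalMeasure (volume.restrict (Ioc 0 1)) := by
  have hm : Measurable fun z ↦ chordalDistSq z 0 := by fun_prop
  refine ⟨hm, Measure.ext_of_lintegral _ fun g hg ↦ ?_⟩
  calc ∫⁻ x, g x ∂sphericalMeasure.map (fun z ↦ chordalDistSq z 0)
      = ∫⁻ z : ℂ, ENNReal.ofReal (1 / Real.pi * (1 / (1 + ‖z‖ ^ 2) ^ 2)) *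
          g (‖z‖ ^ 2 / (1 + ‖z‖ ^ 2)) := by
        rw [lintegral_map hg hm, lintegral_sphericalMeasure (by fun_prop)]
        simp [chordalDistSq, sphericalDensity]
    _ = ENNReal.ofReal (2 * Real.pi) * ∫⁻ r in Ioi (0 : ℝ), ENNReal.ofReal r *
          (ENNReal.ofReal (1 / Real.pi * (1 / (1 + r ^ 2) ^ 2)) * g (r ^ 2 / (1 + r ^ 2))) :=
        lintegral_comp_norm_complex (g := fun r ↦
          ENNReal.ofReal (1 / Real.pi * (1 / (1 + r ^ 2) ^ 2)) * g (r ^ 2 / (1 + r ^ 2)))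
          (by fun_prop)
    _ = ∫⁻ r in Ioi (0 : ℝ), ENNReal.ofReal (2 * r / (1 + r ^ 2) ^ 2) *
          g (r ^ 2 / (1 + r ^ 2)) := by
        rw [← lintegral_const_mul' _ _ ENNReal.ofReal_ne_top]
        refine setLIntegral_congr_fun measurableSet_Ioi fun r (hr : 0 < r) ↦ ?_
        simp only [← mul_assoc, ← ENNReal.ofReal_mul Real.two_pi_pos.le]
        rw [← ENNReal.ofReal_mul (by positivity)]
        congr 2
        field_simp
    _ = ∫⁻ x in Ioc 0 1, g x := by
        rw [← lintegral_Ioo_eq_lintegral_Ioi_sq_div_one_add_sq, restrict_Ioo_eq_restrict_Ioc]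

end SphericalMeasure

section Rotation

/-- The rotation of the Riemann sphere that takes `w` to `0`, in the stereographic coordinate. The
pole `-1 / conj w`, which should go to `∞`, is sent to `0`. -/
noncomputable def sphericalRotation (w z : ℂ) : ℂ := (z - w) / (1 + conj w * z)

/-- The points of the plane that `sphericalRotation w` does not move to `∞`. -/
def rotationDomain (w : ℂ) : Set ℂ := {z | 1 + conj w * z ≠ 0}

theorem ae_mem_rotationDomain (w : ℂ) : ∀ᵐ z, z ∈ rotationDomain w := by
  refine Set.Subsingleton.measure_zero (fun a ha b hb ↦ ?_) _
  simp only [rotationDomain, mem_compl_iff, mem_ofPred_eq, not_not] at ha hb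
  have hw : conj w ≠ 0 := by
    intro h
    simp [h] at ha
  exact mul_left_cancel₀ hw (by linear_combination ha - hb)

theorem measurableSet_rotationDomain (w : ℂ) : MeasurableSet (rotationDomain w) :=
  (isOpen_ne_fun (by fun_prop) (by fun_prop)).measurableSet

@[fun_prop]
theorem measurable_sphericalRotation (w : ℂ) : Measurable (sphericalRotation w) := by
  unfold sphericalRotation
  fun_prop

variable {w z : ℂ}

theorem norm_one_add_conj_mul_self (w : ℂ) : ‖1 + conj w * w‖ = 1 + ‖w‖ ^ 2 := by
  rw [Complex.conj_mul']
  exact_mod_cast Complex.norm_of_nonneg (by positivity : (0 : ℝ) ≤ 1 + ‖w‖ ^ 2)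

theorem self_mem_rotationDomain (w : ℂ) : w ∈ rotationDomain w := by
  rw [rotationDomain, mem_ofPred_eq, ← norm_ne_zero_iff, norm_one_add_conj_mul_self]
  positivity

theorem one_add_conj_neg_mul_sphericalRotation (hz : z ∈ rotationDomain w) :
    1 + conj (-w) * sphericalRotation w z = (1 + conj w * w) / (1 + conj w * z) := by
  have hz : 1 + conj w * z ≠ 0 := hz
  rw [sphericalRotation, map_neg, eq_div_iff hz, add_mul, mul_assoc, div_mul_cancel₀ _ hz]
  ring

theorem mapsTo_sphericalRotation (w : ℂ) :
    MapsTo (sphericalRotation w) (rotationDomain w) (rotationDomain (-w)) := fun z hz ↦ by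
  rw [rotationDomain, mem_ofPred_eq, one_add_conj_neg_mul_sphericalRotation hz]
  exact div_ne_zero (self_mem_rotationDomain w) hz

theorem leftInvOn_sphericalRotation_neg (w : ℂ) :
    LeftInvOn (sphericalRotation (-w)) (sphericalRotation w) (rotationDomain w) := fun z hz ↦ by
  have hz' : 1 + conj w * z ≠ 0 := hz
  have hw : 1 + conj w * w ≠ 0 := self_mem_rotationDomain w
  rw [sphericalRotation, one_add_conj_neg_mul_sphericalRotation hz, sphericalRotation,
    div_eq_iff (div_ne_zero hw hz'), sub_neg_eq_add, div_add' _ _ _ hz', mul_div_assoc']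
  ring

theorem bijOn_sphericalRotation (w : ℂ) :
    BijOn (sphericalRotation w) (rotationDomain w) (rotationDomain (-w)) := by
  refine InvOn.bijOn (f' := sphericalRotation (-w)) ⟨leftInvOn_sphericalRotation_neg w, ?_⟩
    (mapsTo_sphericalRotation w) ?_
  · simpa only [neg_neg] using leftInvOn_sphericalRotation_neg (-w)
  · simpa only [neg_neg] using mapsTo_sphericalRotation (-w)

theorem hasDerivAt_sphericalRotation (hz : z ∈ rotationDomain w) :
    HasDerivAt (sphericalRotation w) ((1 + conj w * w) / (1 + conj w * z) ^ 2) z := by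
  refine (((hasDerivAt_id z).sub_const w).div
    (((hasDerivAt_id z).const_mul (conj w)).const_add 1) hz).congr_deriv ?_
  rw [id]
  ring

theorem norm_one_add_conj_mul_sq_add_norm_sub_sq (w z : ℂ) :
    ‖1 + conj w * z‖ ^ 2 + ‖z - w‖ ^ 2 = (1 + ‖z‖ ^ 2) * (1 + ‖w‖ ^ 2) := by
  simp only [← Complex.normSq_eq_norm_sq, Complex.normSq_apply, Complex.add_re, Complex.add_im,
    Complex.sub_re, Complex.sub_im, Complex.mul_re, Complex.mul_im, Complex.conj_re,
    Complex.conj_im, Complex.one_re, Complex.one_im]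
  ring

theorem one_add_norm_sphericalRotation_sq (hz : z ∈ rotationDomain w) :
    1 + ‖sphericalRotation w z‖ ^ 2 =
      (1 + ‖z‖ ^ 2) * (1 + ‖w‖ ^ 2) / ‖1 + conj w * z‖ ^ 2 := by
  have hz : ‖1 + conj w * z‖ ≠ 0 := norm_ne_zero_iff.2 hz
  rw [← norm_one_add_conj_mul_sq_add_norm_sub_sq, sphericalRotation, norm_div, div_pow, add_div,
    div_self (pow_ne_zero 2 hz)]

theorem chordalDistSq_sphericalRotation_zero (hz : z ∈ rotationDomain w) :
    chordalDistSq (sphericalRotation w z) 0 = chordalDistSq z w := by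
  have hz' : ‖1 + conj w * z‖ ≠ 0 := norm_ne_zero_iff.2 hz
  rw [chordalDistSq, sub_zero, one_add_norm_sphericalRotation_sq hz, sphericalRotation, norm_div,
    chordalDistSq, norm_zero, zero_pow two_ne_zero, add_zero, mul_one, div_pow,
    div_div_div_cancel_right₀ (pow_ne_zero 2 hz')]

theorem norm_deriv_sq_mul_sphericalDensity_sphericalRotation (hz : z ∈ rotationDomain w) :
    ‖(1 + conj w * w) / (1 + conj w * z) ^ 2‖ ^ 2 * sphericalDensity (sphericalRotation w z) =
      sphericalDensity z := by
  have hz' : ‖1 + conj w * z‖ ≠ 0 := norm_ne_zero_iff.2 hz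
  rw [sphericalDensity, one_add_norm_sphericalRotation_sq hz, sphericalDensity, norm_div, norm_pow,
    norm_one_add_conj_mul_self]
  field_simp

theorem measurePreserving_sphericalRotation (w : ℂ) :
    MeasurePreserving (sphericalRotation w) sphericalMeasure sphericalMeasure := by
  refine ⟨by fun_prop, Measure.ext_of_lintegral _ fun g hg ↦ ?_⟩
  rw [lintegral_map hg (by fun_prop), lintegral_sphericalMeasure (by fun_prop),
    lintegral_sphericalMeasure hg]
  symm
  calc ∫⁻ z, ENNReal.ofReal (sphericalDensity z) * g z
      = ∫⁻ z in sphericalRotation w '' rotationDomain w,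
          ENNReal.ofReal (sphericalDensity z) * g z := by
        rw [(bijOn_sphericalRotation w).image_eq,
          Measure.restrict_eq_self_of_ae_mem (ae_mem_rotationDomain (-w))]
    _ = ∫⁻ z in rotationDomain w, ENNReal.ofReal (‖(1 + conj w * w) / (1 + conj w * z) ^ 2‖ ^ 2) *
          (ENNReal.ofReal (sphericalDensity (sphericalRotation w z)) *
            g (sphericalRotation w z)) :=
        lintegral_image_eq_lintegral_norm_deriv_sq_mul (measurableSet_rotationDomain w)
          (fun z hz ↦ (hasDerivAt_sphericalRotation hz).hasDerivWithinAt)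
          (bijOn_sphericalRotation w).injOn _
    _ = ∫⁻ z in rotationDomain w, ENNReal.ofReal (sphericalDensity z) *
          g (sphericalRotation w z) := by
        refine setLIntegral_congr_fun (measurableSet_rotationDomain w) fun z hz ↦ ?_
        simp only [← mul_assoc, ← ENNReal.ofReal_mul (sq_nonneg _),
          norm_deriv_sq_mul_sphericalDensity_sphericalRotation hz]
    _ = ∫⁻ z, ENNReal.ofReal (sphericalDensity z) * g (sphericalRotation w z) := by
        rw [Measure.restrict_eq_self_of_ae_mem (ae_mem_rotationDomain w)]

theorem measurePreserving_chordalDistSq (w : ℂ) :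
    MeasurePreserving (fun z ↦ chordalDistSq z w) sphericalMeasure
      (volume.restrict (Ioc 0 1)) := by
  have hae : (fun z ↦ chordalDistSq (sphericalRotation w z) 0) =ᵐ[sphericalMeasure]
      fun z ↦ chordalDistSq z w :=
    (withDensity_absolutelyContinuous _ _).ae_le
      ((ae_mem_rotationDomain w).mono fun _ ↦ chordalDistSq_sphericalRotation_zero)
  exact ((measurePreserving_chordalDistSq_zero.comp
    (measurePreserving_sphericalRotation w)).hasLaw.congr hae.symm).measurePreserving (by fun_prop)

end Rotation

instance isProbabilityMeasure_sphericalMeasure : IsProbabilityMeasure sphericalMeasure :=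
  have : IsProbabilityMeasure (volume.restrict (Ioc (0 : ℝ) 1)) := ⟨by simp⟩
  measurePreserving_chordalDistSq_zero.hasLaw.isProbabilityMeasure

section Product

variable {X Y : Type*} [MeasurableSpace X] [MeasurableSpace Y] {μ : Measure X} {ρ : Measure Y}

theorem measurePreserving_uncurry_of_forall {Z : Type*} [MeasurableSpace Z] {ν : Measure Z}
    [SFinite μ] [IsProbabilityMeasure ρ] {f : X → Y → Z} (hf : Measurable (Function.uncurry f))
    (h : ∀ y, MeasurePreserving (fun x ↦ f x y) μ ν) :
    MeasurePreserving (Function.uncurry f) (μ.prod ρ) ν := by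
  rcases isEmpty_or_nonempty Y with hY | ⟨⟨y⟩⟩
  · exact (IsProbabilityMeasure.ne_zero ρ (Measure.eq_zero_of_isEmpty ρ)).elim
  have : SFinite ν := (h y).map_eq ▸ inferInstance
  have hskew : MeasurePreserving (fun p : Y × X ↦ (p.1, f p.2 p.1)) (ρ.prod μ) (ρ.prod ν) :=
    (MeasurePreserving.id ρ).skew_product (g := fun y x ↦ f x y)
      (hf.comp measurable_swap) (.of_forall fun y ↦ (h y).map_eq)
  exact measurePreserving_snd.comp (hskew.comp Measure.measurePreserving_swap)

variable {φ : ℝ → ℝ} {F : X × Y → ℝ} [IsProbabilityMeasure ρ]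

theorem ae_map_integral_le_integral_map [SFinite μ] (hφ : ConvexOn ℝ univ φ)
    (hF : Integrable F (μ.prod ρ))
    (hφF : Integrable (fun p ↦ φ (F p)) (μ.prod ρ)) :
    ∀ᵐ x ∂μ, φ (∫ y, F (x, y) ∂ρ) ≤ ∫ y, φ (F (x, y)) ∂ρ := by
  filter_upwards [hF.prod_right_ae, hφF.prod_right_ae] with x hx hφx
  exact hφ.map_integral_le (hφ.continuousOn isOpen_univ) isClosed_univ (by simp) hx hφx

theorem integrable_map_integral [IsFiniteMeasure μ] (hφ : ConvexOn ℝ univ φ)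
    (hF : Integrable F (μ.prod ρ))
    (hφF : Integrable (fun p ↦ φ (F p)) (μ.prod ρ)) :
    Integrable (fun x ↦ φ (∫ y, F (x, y) ∂ρ)) μ := by
  have hc : ContinuousOn φ univ := hφ.continuousOn isOpen_univ
  obtain ⟨a, b, hab⟩ := hφ.exists_affine_le_real isClosed_univ hc.lowerSemicontinuousOn
  have hL : Integrable (fun x ↦ ∫ y, F (x, y) ∂ρ) μ := hF.integral_prod_left
  exact integrable_of_le_of_le
    ((continuousOn_univ.1 hc).comp_aestronglyMeasurable hL.aestronglyMeasurable)
    (.of_forall fun x ↦ hab _ (mem_univ _)) (ae_map_integral_le_integral_map hφ hF hφF)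
    ((hL.const_mul a).add (integrable_const b)) hφF.integral_prod_left

theorem integral_map_integral_le_integral_map_prod [IsFiniteMeasure μ] (hφ : ConvexOn ℝ univ φ)
    (hF : Integrable F (μ.prod ρ))
    (hφF : Integrable (fun p ↦ φ (F p)) (μ.prod ρ)) :
    ∫ x, φ (∫ y, F (x, y) ∂ρ) ∂μ ≤ ∫ p, φ (F p) ∂μ.prod ρ := by
  rw [integral_prod _ hφF]
  exact integral_mono_ae (integrable_map_integral hφ hF hφF) hφF.integral_prod_left
    (ae_map_integral_le_integral_map hφ hF hφF)

theorem map_integral_prod_le_integral_map_integral [IsProbabilityMeasure μ] (hφ : ConvexOn ℝ univ φ)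
    (hF : Integrable F (μ.prod ρ))
    (hφF : Integrable (fun p ↦ φ (F p)) (μ.prod ρ)) :
    φ (∫ p, F p ∂μ.prod ρ) ≤ ∫ x, φ (∫ y, F (x, y) ∂ρ) ∂μ := by
  rw [integral_prod _ hF]
  exact hφ.map_integral_le (hφ.continuousOn isOpen_univ) isClosed_univ (by simp)
    hF.integral_prod_left (integrable_map_integral hφ hF hφF)

end Product

section Green

/-- The Green function `Usph` as a function of the squared chordal distance. Its value at `0` is
`1 / 2` instead of `-∞`. -/
noncomputable def greenProfile (t : ℝ) : ℝ := 1 / 2 + 1 / 2 * Real.log t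

@[fun_prop]
theorem measurable_greenProfile : Measurable greenProfile := by
  unfold greenProfile
  fun_prop

theorem intervalIntegrable_greenProfile (a b : ℝ) :
    IntervalIntegrable greenProfile volume a b :=
  intervalIntegrable_const.add (intervalIntegral.intervalIntegrable_log'.const_mul _)

theorem integral_greenProfile : ∫ t in (0)..1, greenProfile t = 0 := by
  simp only [greenProfile]
  rw [intervalIntegral.integral_add intervalIntegrable_const
    (intervalIntegral.intervalIntegrable_log'.const_mul _), intervalIntegral.integral_const_mul,
    integral_log]
  norm_num

variable {α : ℝ}

theorem exp_mul_greenProfile {t : ℝ} (ht : 0 < t) :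
    Real.exp (α * greenProfile t) = Real.exp (α / 2) * t ^ (α / 2) := by
  rw [greenProfile, Real.rpow_def_of_pos ht, ← Real.exp_add]
  ring_nf

theorem intervalIntegrable_exp_mul_greenProfile (hα : -2 < α) :
    IntervalIntegrable (fun t ↦ Real.exp (α * greenProfile t)) volume 0 1 := by
  refine ((intervalIntegral.intervalIntegrable_rpow' (r := α / 2) (by linarith)).const_mul
    (Real.exp (α / 2))).congr fun t ht ↦ ?_
  rw [uIoc_of_le zero_le_one] at ht
  exact (exp_mul_greenProfile ht.1).symm

theorem integral_exp_mul_greenProfile (hα : -2 < α) :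
    ∫ t in (0)..1, Real.exp (α * greenProfile t) = 2 * Real.exp (α / 2) / (2 + α) := by
  calc ∫ t in (0)..1, Real.exp (α * greenProfile t)
      = ∫ t in (0)..1, Real.exp (α / 2) * t ^ (α / 2) :=
        intervalIntegral.integral_congr_uIoo fun t ht ↦ exp_mul_greenProfile (by simp_all)
    _ = Real.exp (α / 2) * (1 / (α / 2 + 1)) := by
        rw [intervalIntegral.integral_const_mul, integral_rpow (.inl (by linarith)), Real.one_rpow,
          Real.zero_rpow (by linarith), sub_zero]
    _ = 2 * Real.exp (α / 2) / (2 + α) := by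
        rw [show α / 2 + 1 = (2 + α) / 2 by ring, one_div_div]
        ring

variable (ρ : Measure ℂ) [IsProbabilityMeasure ρ]

theorem measurePreserving_uncurry_chordalDistSq :
    MeasurePreserving (Function.uncurry chordalDistSq) (sphericalMeasure.prod ρ)
      (volume.restrict (Ioc 0 1)) :=
  measurePreserving_uncurry_of_forall (by fun_prop) measurePreserving_chordalDistSq

theorem integrable_comp_Usph {f : ℝ → ℝ}
    (hf : IntervalIntegrable (fun t ↦ f (greenProfile t)) volume 0 1) :
    Integrable (fun p : ℂ × ℂ ↦ f (Usph p.1 p.2)) (sphericalMeasure.prod ρ) :=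
  (measurePreserving_uncurry_chordalDistSq ρ).integrable_comp_of_integrable
    ((intervalIntegrable_iff_integrableOn_Ioc_of_le zero_le_one).1 hf)

theorem integral_comp_Usph {f : ℝ → ℝ} (hf : Measurable f) :
    ∫ p, f (Usph p.1 p.2) ∂sphericalMeasure.prod ρ = ∫ t in (0)..1, f (greenProfile t) := by
  rw [intervalIntegral.integral_of_le zero_le_one]
  exact (measurePreserving_uncurry_chordalDistSq ρ).hasLaw.integral_comp
    (hf.comp measurable_greenProfile).aestronglyMeasurable

end Green

theorem convexOn_exp_const_mul (α : ℝ) : ConvexOn ℝ univ fun x ↦ Real.exp (α * x) :=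
  convexOn_exp.comp_linearMap (LinearMap.mulLeft ℝ α)

theorem Usph_exp_potential_bounds_general (α : ℝ) (hα : -2 < α)
    (ρ : Measure ℂ) [IsProbabilityMeasure ρ] :
    1 ≤ 1 / Real.pi *
        ∫ z : ℂ, Real.exp (α * ∫ w : ℂ, Usph z w ∂ρ) * (1 / (1 + ‖z‖ ^ 2) ^ 2) ∧
    1 / Real.pi *
        ∫ z : ℂ, Real.exp (α * ∫ w : ℂ, Usph z w ∂ρ) * (1 / (1 + ‖z‖ ^ 2) ^ 2) ≤
      2 * Real.exp (α / 2) / (2 + α) := by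
  have hU : Integrable (fun p : ℂ × ℂ ↦ Usph p.1 p.2) (sphericalMeasure.prod ρ) :=
    integrable_comp_Usph ρ (f := id) (intervalIntegrable_greenProfile 0 1)
  have hexpU : Integrable (fun p : ℂ × ℂ ↦ Real.exp (α * Usph p.1 p.2))
      (sphericalMeasure.prod ρ) :=
    integrable_comp_Usph ρ (f := fun u ↦ Real.exp (α * u))
      (intervalIntegrable_exp_mul_greenProfile hα)
  have hU₀ : ∫ p, Usph p.1 p.2 ∂sphericalMeasure.prod ρ = 0 :=
    (integral_comp_Usph ρ measurable_id).trans integral_greenProfile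
  rw [← integral_sphericalMeasure fun z ↦ Real.exp (α * ∫ w, Usph z w ∂ρ)]
  constructor
  · simpa [hU₀] using
      map_integral_prod_le_integral_map_integral (convexOn_exp_const_mul α) hU hexpU
  · rw [← integral_exp_mul_greenProfile hα,
      ← integral_comp_Usph ρ (f := fun u ↦ Real.exp (α * u)) (by fun_prop)]
    exact integral_map_integral_le_integral_map_prod (convexOn_exp_const_mul α) hU hexpU

/-- for a Borel probability measure `ρ` on `ℂ` and `α > 0`. -/
theorem Usph_exp_potential_bounds (α : ℝ) (hα : 0 < α)
    (ρ : Measure ℂ) (hρ : IsProbabilityMeasure ρ) :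
    1 ≤ 1 / Real.pi *
        ∫ z : ℂ, Real.exp (α * ∫ w : ℂ, Usph z w ∂ρ) * (1 / (1 + ‖z‖ ^ 2) ^ 2) ∧
    1 / Real.pi *
        ∫ z : ℂ, Real.exp (α * ∫ w : ℂ, Usph z w ∂ρ) * (1 / (1 + ‖z‖ ^ 2) ^ 2) ≤
      2 * Real.exp (α / 2) / (2 + α) :=
  Usph_exp_potential_bounds_general α (by linarith) ρ
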